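/- Let F be an expanding 3-satisfiable weighted CNF formula. Then there exists a truth assignment tau with sat_tau(F) >= (2/3) w(F) + (2/453) |V(F)|. -/

import Mathlib

open Classical

/-- A clause: a finite set of literals, each a (variable, polarity) pair. -/
abbrev Clause := Finset (ℕ × Bool)

/-- A truth assignment satisfies a clause if some literal evaluates to true. -/
def SatC (τ : ℕ → Bool) (C : Clause) : Prop := ∃ l ∈ C, τ l.1 = l.2

/-- A CNF formula: clauses are nonempty and contain no variable together with its negation. -/
def IsCNF (F : Finset Clause) : Prop :=
  ∀ C ∈ F, C.Nonempty ∧ ∀ v : ℕ, ¬((v, true) ∈ C ∧ (v, false) ∈ C)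

/-- Total weight of a set of clauses. -/
def wt (w : Clause → ℕ) (G : Finset Clause) : ℕ := ∑ C ∈ G, w C

/-- Total weight of the clauses of `G` satisfied by `τ`. -/
noncomputable def satWt (w : Clause → ℕ) (τ : ℕ → Bool) (G : Finset Clause) : ℕ :=
  ∑ C ∈ G.filter (fun C => SatC τ C), w C

/-- `F` is 2-satisfiable. -/
def Sat2 (F : Finset Clause) : Prop :=
  ∀ C1 ∈ F, ∀ C2 ∈ F, ∃ τ, SatC τ C1 ∧ SatC τ C2

/-- `F` is 3-satisfiable. -/
def Sat3 (F : Finset Clause) : Prop :=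
  ∀ C1 ∈ F, ∀ C2 ∈ F, ∀ C3 ∈ F, ∃ τ, SatC τ C1 ∧ SatC τ C2 ∧ SatC τ C3

/-- The set of variables of a formula. -/
def vars (F : Finset Clause) : Finset ℕ := F.sup (fun C => C.image Prod.fst)

/-- The set of clauses of `F` containing a variable of `U`. -/
noncomputable def FU (F : Finset Clause) (U : Finset ℕ) : Finset Clause :=
  F.filter (fun C => ∃ l ∈ C, l.1 ∈ U)

/-- Unit variables: variables occurring in unit clauses. -/
def unitVars (F : Finset Clause) : Finset ℕ :=
  (F.filter (fun C => C.card = 1)).sup (fun C => C.image Prod.fst)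

/-- All unit clauses of `F` are positive. -/
def UnitPos (F : Finset Clause) : Prop :=
  ∀ C ∈ F, C.card = 1 → ∃ x, C = {(x, true)}

/-- A hard clause: a positive unit clause, or a two-literal clause `{¬x, y}` / `{¬x, ¬y}`
with `x` a unit variable and `y` not a unit variable. -/
def IsHard (F : Finset Clause) (C : Clause) : Prop :=
  (∃ x, C = {(x, true)}) ∨
  (∃ x ∈ unitVars F, ∃ y ∉ unitVars F, ∃ b : Bool, C = {(x, false), (y, b)})

/-- The soft (non-hard) clauses of `F`. -/
noncomputable def softF (F : Finset Clause) : Finset Clause :=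
  F.filter (fun C => ¬ IsHard F C)

/-- Two-literal hard clauses. -/
noncomputable def F2set (F : Finset Clause) : Finset Clause :=
  F.filter (fun C => ∃ x ∈ unitVars F, ∃ y ∉ unitVars F, ∃ b : Bool, C = {(x, false), (y, b)})

/-- Non-unit variables occurring in two-literal hard clauses. -/
noncomputable def V2set (F : Finset Clause) : Finset ℕ :=
  ((F2set F).sup (fun C => C.image Prod.fst)) \ unitVars F

/-- `F` is a hard formula: every clause is hard. -/
def HardFormula (F : Finset Clause) : Prop := ∀ C ∈ F, IsHard F C

/-- `F` is expanding: every set `X` of variables is covered by clauses of total weight at least `|X|`. -/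
def Expanding (F : Finset Clause) (w : Clause → ℕ) : Prop :=
  ∀ X ⊆ vars F, X.card ≤ wt w (FU F X)

/-- Extend an assignment on the variables of `F` to all of `ℕ`. -/
noncomputable def extAssign (F : Finset Clause) (α : {v // v ∈ vars F} → Bool) : ℕ → Bool :=
  fun n => if h : n ∈ vars F then α ⟨n, h⟩ else false

/-- The probability that the random assignment (unit variables true with probability 2/3,
other variables true with probability 1/2, independently) satisfies the clause `C`. -/
noncomputable def probSat (F : Finset Clause) (C : Clause) : ℝ :=
  ∑ α : {v // v ∈ vars F} → Bool,
    (∏ v : {v // v ∈ vars F},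
      (if (v : ℕ) ∈ unitVars F then (if α v then (2:ℝ)/3 else 1/3) else 1/2)) *
    (if SatC (extAssign F α) C then 1 else 0)

/-!
Orient each variable by `pol`, so that unit clauses ask for `x`. The remaining clauses split into
pair clauses `{¬x, y}`, `{¬x, ¬y}` with `x` a unit variable and `y` not one, and soft clauses. If
unit variables hold with probability `2/3` and the other variables with probability `1/2`, then unit
and pair clauses are falsified with probability exactly `1/3`, soft clauses with probability at most
`8/27`, so `2/3` of the weight is satisfied with a surplus proportional to the soft weight.

A surplus proportional to the number of unit variables comes from first fixing the other variables
by fair coins and then moving the probability of each unit variable slightly away from `2/3`, in the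
direction that helps. By 3-satisfiability `{¬x, y}` and `{¬x, ¬y}` are not both clauses, so each
coin relevant to `x` shifts the derivative of the loss in the probability of `x` by at least `1`,
and this derivative is at least `1/2` in absolute value on average. Exchanging the roles of the two
kinds of variables gives a surplus proportional to the number of variables `y` in pair clauses.
Expansion bounds the number of the remaining variables by the soft weight.
-/

section UniformSubset

open scoped BigOperators

variable {α ι : Type*} {V s : Finset α} {v : α}

lemma expect_powerset_eq_expect_erase_add_insert [DecidableEq α] (hv : v ∈ V)
    (f : Finset α → ℝ) :
    𝔼 A ∈ V.powerset, f A = 𝔼 A ∈ V.powerset, (f (A.erase v) + f (insert v A)) / 2 := by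
  obtain ⟨W, hvW, rfl⟩ : ∃ W, v ∉ W ∧ insert v W = V :=
    ⟨V.erase v, Finset.notMem_erase v V, Finset.insert_erase hv⟩
  rw [Finset.expect_eq_sum_div_card, Finset.expect_eq_sum_div_card,
    Finset.sum_powerset_insert hvW, Finset.sum_powerset_insert hvW, ← Finset.sum_add_distrib,
    ← Finset.sum_add_distrib]
  congr 1
  refine Finset.sum_congr rfl fun A hA => ?_
  have hvA : v ∉ A := fun h => hvW (Finset.mem_powerset.1 hA h)
  rw [Finset.erase_insert hvA, Finset.erase_eq_of_notMem hvA, Finset.insert_idem]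
  ring

lemma expect_powerset_ite_mem [DecidableEq α] (hv : v ∈ V) (a b : ℝ) :
    𝔼 A ∈ V.powerset, (if v ∈ A then a else b) = (a + b) / 2 := by
  rw [expect_powerset_eq_expect_erase_add_insert hv]
  simp only [Finset.notMem_erase, Finset.mem_insert_self, if_true, if_false]
  rw [Finset.expect_const (Finset.powerset_nonempty V), add_comm]

lemma expect_powerset_sum_ite_mem [DecidableEq α] (hs : s ⊆ V) (a b : α → ℝ) :
    𝔼 A ∈ V.powerset, ∑ i ∈ s, (if i ∈ A then a i else b i) = ∑ i ∈ s, (a i + b i) / 2 := by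
  rw [Finset.expect_sum_comm]
  exact Finset.sum_congr rfl fun i hi => expect_powerset_ite_mem (hs hi) _ _

lemma expect_powerset_prod {t : Finset ι} {x : ι → α} (hV : ∀ i ∈ t, x i ∈ V)
    (hx : Set.InjOn x t) (g : ι → Prop → ℝ) :
    𝔼 A ∈ V.powerset, ∏ i ∈ t, g i (x i ∈ A) = ∏ i ∈ t, (g i False + g i True) / 2 := by
  induction t using Finset.cons_induction with
  | empty => simp [Finset.expect_const (Finset.powerset_nonempty V)]
  | cons i t hi ih =>
    have hne : ∀ j ∈ t, x j ≠ x i := fun j hj h =>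
      hi (hx (Finset.mem_cons_of_mem hj) (Finset.mem_cons_self i t) h ▸ hj)
    have herase (A : Finset α) : ∏ j ∈ t, g j (x j ∈ A.erase (x i)) = ∏ j ∈ t, g j (x j ∈ A) :=
      Finset.prod_congr rfl fun j hj => by simp [hne j hj]
    have hinsert (A : Finset α) : ∏ j ∈ t, g j (x j ∈ insert (x i) A) = ∏ j ∈ t, g j (x j ∈ A) :=
      Finset.prod_congr rfl fun j hj => by simp [hne j hj]
    rw [Finset.prod_cons, ← ih (fun j hj => hV j (Finset.mem_cons_of_mem hj))
        (hx.mono (Finset.coe_subset.2 (Finset.subset_cons hi))), Finset.mul_expect,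
      expect_powerset_eq_expect_erase_add_insert (hV i (Finset.mem_cons_self i t))]
    refine Finset.expect_congr rfl fun A _ => ?_
    simp only [Finset.prod_cons, herase, hinsert, Finset.notMem_erase, Finset.mem_insert_self]
    ring

lemma half_abs_sub_le_expect_abs_add_sum_ite_mem [DecidableEq α] (hvV : v ∈ V) (hvs : v ∈ s)
    (c : ℝ) (a b : α → ℝ) :
    |a v - b v| / 2 ≤ 𝔼 A ∈ V.powerset, |c + ∑ i ∈ s, if i ∈ A then a i else b i| := by
  set f : Finset α → ℝ := fun A => c + ∑ i ∈ s, if i ∈ A then a i else b i with hf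
  have toggle (A : Finset α) : f (insert v A) - f (A.erase v) = a v - b v := by
    have hrest : ∑ i ∈ s.erase v, (if i ∈ insert v A then a i else b i) =
        ∑ i ∈ s.erase v, if i ∈ A.erase v then a i else b i :=
      Finset.sum_congr rfl fun i hi => by simp [Finset.ne_of_mem_erase hi]
    simp only [hf, ← Finset.add_sum_erase _ _ hvs, hrest, Finset.mem_insert_self,
      Finset.notMem_erase, if_true, if_false]
    ring
  rw [expect_powerset_eq_expect_erase_add_insert hvV]
  refine Finset.le_expect (Finset.powerset_nonempty V) fun A _ => ?_
  have := abs_sub (f (insert v A)) (f (A.erase v))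
  rw [toggle A] at this
  linarith

end UniformSubset

section FractionalAssignment

lemma exists_zero_one_le_of_update_affine {ι : Type*} [DecidableEq ι] {f : (ι → ℝ) → ℝ}
    (hf : ∀ p i t, f (Function.update p i t) =
      t * f (Function.update p i 1) + (1 - t) * f (Function.update p i 0))
    {p : ι → ℝ} (hp : ∀ i, p i ∈ Set.Icc 0 1) (s : Finset ι) :
    ∃ q : ι → ℝ, (∀ i ∈ s, q i = 0 ∨ q i = 1) ∧ (∀ i ∉ s, q i = p i) ∧ f q ≤ f p := by
  induction s using Finset.induction_on with
  | empty => exact ⟨p, by simp, by simp, le_rfl⟩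
  | insert i s his ih =>
    obtain ⟨q, hqs, hqp, hle⟩ := ih
    have hqi : q i ∈ Set.Icc 0 1 := hqp i his ▸ hp i
    obtain ⟨t, ht, hft⟩ : ∃ t : ℝ, (t = 0 ∨ t = 1) ∧ f (Function.update q i t) ≤ f q := by
      have haffine := hf q i (q i)
      rw [Function.update_eq_self] at haffine
      rcases le_total (f (Function.update q i 0)) (f (Function.update q i 1)) with h | h
      · exact ⟨0, Or.inl rfl, by nlinarith [mul_le_mul_of_nonneg_left h hqi.1]⟩
      · exact ⟨1, Or.inr rfl, by
          nlinarith [mul_le_mul_of_nonneg_left h (sub_nonneg.2 hqi.2)]⟩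
    refine ⟨Function.update q i t, fun j hj => ?_, fun j hj => ?_, hft.trans hle⟩
    · rcases eq_or_ne j i with rfl | hji
      · simpa using ht
      · simpa [hji] using hqs j (Finset.mem_of_mem_insert_of_ne hj hji)
    · obtain ⟨hji, hjs⟩ := not_or.1 (mt Finset.mem_insert.2 hj)
      simpa [hji] using hqp j hjs

variable {F : Finset Clause} {C : Clause} {l : ℕ × Bool} {π : ℕ → Bool} {p : ℕ → ℝ}

/-- The probability that the literal `l` is false when each variable `v` takes the value `π v` with
probability `p v`. -/
noncomputable def falseProb (π : ℕ → Bool) (p : ℕ → ℝ) (l : ℕ × Bool) : ℝ :=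
  if l.2 = π l.1 then 1 - p l.1 else p l.1

/-- The expected weight of the falsified clauses when each variable `v` independently takes the
value `π v` with probability `p v`. -/
noncomputable def expectedLoss (F : Finset Clause) (w : Clause → ℕ) (π : ℕ → Bool) (p : ℕ → ℝ) :
    ℝ :=
  ∑ C ∈ F, (w C : ℝ) * ∏ l ∈ C, falseProb π p l

lemma falseProb_nonneg (hp : p l.1 ∈ Set.Icc 0 1) : 0 ≤ falseProb π p l := by
  unfold falseProb
  split_ifs
  · exact sub_nonneg.2 hp.2
  · exact hp.1

lemma IsCNF.injOn_fst (hF : IsCNF F) (hC : C ∈ F) :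
    Set.InjOn Prod.fst (C : Set (ℕ × Bool)) := by
  rintro ⟨v, b⟩ hb ⟨v', b'⟩ hb' (rfl : v = v')
  have := (hF C hC).2 v
  cases b <;> cases b' <;> simp_all

lemma fst_mem_vars (hC : C ∈ F) (hl : l ∈ C) : l.1 ∈ vars F :=
  Finset.mem_sup.2 ⟨C, hC, Finset.mem_image_of_mem _ hl⟩

lemma prod_falseProb_update (hC : Set.InjOn Prod.fst (C : Set (ℕ × Bool))) (v : ℕ) (t : ℝ) :
    ∏ l ∈ C, falseProb π (Function.update p v t) l =
      t * ∏ l ∈ C, falseProb π (Function.update p v 1) l +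
        (1 - t) * ∏ l ∈ C, falseProb π (Function.update p v 0) l := by
  have hother (D : Clause) (hD : ∀ m ∈ D, m.1 ≠ v) (s : ℝ) :
      ∏ m ∈ D, falseProb π (Function.update p v s) m = ∏ m ∈ D, falseProb π p m :=
    Finset.prod_congr rfl fun m hm => by simp [falseProb, hD m hm]
  by_cases h : ∃ l ∈ C, l.1 = v
  · obtain ⟨l, hl, rfl⟩ := h
    have hne : ∀ m ∈ C.erase l, m.1 ≠ l.1 := fun m hm h =>
      Finset.ne_of_mem_erase hm (hC (Finset.mem_of_mem_erase hm) hl h)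
    simp only [← Finset.mul_prod_erase C _ hl, hother _ hne]
    simp only [falseProb, Function.update_self]
    split_ifs <;> ring
  · push Not at h
    simp only [hother C h]
    ring

lemma expectedLoss_update (hF : IsCNF F) (w : Clause → ℕ) (v : ℕ) (t : ℝ) :
    expectedLoss F w π (Function.update p v t) =
      t * expectedLoss F w π (Function.update p v 1) +
        (1 - t) * expectedLoss F w π (Function.update p v 0) := by
  simp only [expectedLoss, Finset.mul_sum, ← Finset.sum_add_distrib]
  refine Finset.sum_congr rfl fun C hC => ?_
  rw [prod_falseProb_update (hF.injOn_fst hC)]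
  ring

lemma prod_falseProb_of_zero_one (hp : ∀ l ∈ C, p l.1 = 0 ∨ p l.1 = 1) :
    ∏ l ∈ C, falseProb π p l =
      if SatC (fun v => if p v = 1 then π v else !π v) C then 0 else 1 := by
  set τ : ℕ → Bool := fun v => if p v = 1 then π v else !π v with hτ
  have hlit : ∀ l ∈ C, falseProb π p l = if τ l.1 = l.2 then 0 else 1 := by
    rintro ⟨v, b⟩ hl
    rcases hp _ hl with h | h <;> cases b <;> cases hπ : π v <;> simp [falseProb, hτ, h, hπ]
  rw [Finset.prod_congr rfl hlit]
  split_ifs with hsat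
  · obtain ⟨l, hl, hτl⟩ := hsat
    exact Finset.prod_eq_zero hl (if_pos hτl)
  · exact Finset.prod_eq_one fun l hl => if_neg fun hτl => hsat ⟨l, hl, hτl⟩

lemma satWt_add_sum_unsat (F : Finset Clause) (w : Clause → ℕ) (τ : ℕ → Bool) :
    (satWt w τ F : ℝ) + ∑ C ∈ F, (w C : ℝ) * (if SatC τ C then 0 else 1) = wt w F := by
  rw [satWt, wt, Finset.sum_filter, Nat.cast_sum, Nat.cast_sum, ← Finset.sum_add_distrib]
  refine Finset.sum_congr rfl fun C _ => ?_
  split_ifs <;> simp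

lemma exists_wt_sub_expectedLoss_le_satWt (hF : IsCNF F) (w : Clause → ℕ) (π : ℕ → Bool)
    (hp : ∀ v, p v ∈ Set.Icc 0 1) :
    ∃ τ : ℕ → Bool, (wt w F : ℝ) - expectedLoss F w π p ≤ satWt w τ F := by
  obtain ⟨q, hq, -, hle⟩ := exists_zero_one_le_of_update_affine
    (fun p v t => expectedLoss_update (π := π) (p := p) hF w v t) hp (vars F)
  refine ⟨fun v => if q v = 1 then π v else !π v, ?_⟩
  have hloss : expectedLoss F w π q =
      ∑ C ∈ F, (w C : ℝ) * if SatC (fun v => if q v = 1 then π v else !π v) C then 0 else 1 :=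
    Finset.sum_congr rfl fun C hC => by
      rw [prod_falseProb_of_zero_one fun l hl => hq _ (fst_mem_vars hC hl)]
  linarith [satWt_add_sum_unsat F w fun v => if q v = 1 then π v else !π v]

end FractionalAssignment

section ClauseTypes

variable {F : Finset Clause} {C : Clause} {l : ℕ × Bool} {v x y x' y' : ℕ} {b c c' : Bool}

lemma Sat3.sat2 (h3 : Sat3 F) : Sat2 F := fun C₁ h₁ C₂ h₂ =>
  let ⟨τ, hτ₁, hτ₂, _⟩ := h3 C₁ h₁ C₂ h₂ C₂ h₂
  ⟨τ, hτ₁, hτ₂⟩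

lemma mem_unitVars : v ∈ unitVars F ↔ ∃ b, {(v, b)} ∈ F := by
  simp only [unitVars, Finset.mem_sup, Finset.mem_filter, Finset.card_eq_one, Finset.mem_image]
  constructor
  · rintro ⟨_, ⟨hC, ⟨u, b⟩, rfl⟩, l, hl, rfl⟩
    rw [Finset.mem_singleton.1 hl]
    exact ⟨b, hC⟩
  · rintro ⟨b, hb⟩
    exact ⟨_, ⟨hb, _, rfl⟩, (v, b), Finset.mem_singleton_self _, rfl⟩

lemma unitVars_subset_vars (F : Finset Clause) : unitVars F ⊆ vars F := fun v hv =>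
  let ⟨b, hb⟩ := mem_unitVars.1 hv
  fst_mem_vars (l := (v, b)) hb (Finset.mem_singleton_self _)

/-- The variables of `F` that do not occur in a unit clause. -/
def nonunitVars (F : Finset Clause) : Finset ℕ := vars F \ unitVars F

lemma nonunitVars_subset_vars (F : Finset Clause) : nonunitVars F ⊆ vars F := Finset.sdiff_subset

lemma notMem_unitVars_of_mem_nonunitVars (hy : y ∈ nonunitVars F) : y ∉ unitVars F :=
  (Finset.mem_sdiff.1 hy).2

/-- The preferred polarity of a variable: the one in which it occurs in a unit clause, and `true`
for variables without a unit clause. -/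
noncomputable def pol (F : Finset Clause) (v : ℕ) : Bool := decide ({(v, false)} ∉ F)

/-- The unit clause of the unit variable `x`. -/
noncomputable def unitClause (F : Finset Clause) (x : ℕ) : Clause := {(x, pol F x)}

/-- The clause `{¬x, y}` or `{¬x, ¬y}`, according to `c`, where `x` is oriented by `pol`. -/
noncomputable def pairClause (F : Finset Clause) (x y : ℕ) (c : Bool) : Clause :=
  {(x, !pol F x), (y, c)}

/-- The two-literal clauses falsifying the unit literal of one variable and involving a second,
non-unit variable; when all unit clauses are positive these are the clauses of `F2set`. -/
def IsPairClause (F : Finset Clause) (C : Clause) : Prop :=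
  ∃ x ∈ unitVars F, ∃ y ∉ unitVars F, ∃ c, C = pairClause F x y c

/-- The clauses that are neither unit nor pair clauses; when all unit clauses are positive this is
`softF`. -/
noncomputable def softClauses (F : Finset Clause) : Finset Clause :=
  F.filter fun C => C.card ≠ 1 ∧ ¬ IsPairClause F C

/-- The non-unit variables occurring in pair clauses; when all unit clauses are positive this is
`V2set`. -/
noncomputable def pairVars (F : Finset Clause) : Finset ℕ :=
  (nonunitVars F).filter fun y => ∃ x ∈ unitVars F, ∃ c, pairClause F x y c ∈ F

lemma pol_eq_true (hv : v ∉ unitVars F) : pol F v = true :=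
  decide_eq_true fun h => hv (mem_unitVars.2 ⟨false, h⟩)

lemma unitClause_mem (hx : x ∈ unitVars F) : unitClause F x ∈ F := by
  obtain ⟨b, hb⟩ := mem_unitVars.1 hx
  by_cases h : {(x, false)} ∈ F
  · simp [unitClause, pol, h]
  · cases b
    · exact absurd hb h
    · simpa [unitClause, pol, h] using hb

lemma Sat2.eq_pol (h2 : Sat2 F) (h : {(v, b)} ∈ F) : b = pol F v := by
  obtain ⟨τ, hb, hpol⟩ := h2 _ h _ (unitClause_mem (mem_unitVars.2 ⟨b, h⟩))
  simp only [SatC, unitClause, Finset.mem_singleton, exists_eq_left] at hb hpol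
  exact hb.symm.trans hpol

lemma Sat3.pairClause_not_notMem (h3 : Sat3 F) (hx : x ∈ unitVars F)
    (h : pairClause F x y c ∈ F) : pairClause F x y (!c) ∉ F := by
  intro h'
  obtain ⟨τ, hunit, hpair, hpair'⟩ := h3 _ (unitClause_mem hx) _ h _ h'
  simp only [SatC, unitClause, pairClause, Finset.mem_singleton, Finset.mem_insert, exists_eq_left,
    exists_eq_or_imp] at hunit hpair hpair'
  simp_all

lemma pairClause_injective (hx : x ∈ unitVars F) (hy : y ∉ unitVars F) (hx' : x' ∈ unitVars F)
    (hy' : y' ∉ unitVars F) (h : pairClause F x y c = pairClause F x' y' c') :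
    x = x' ∧ y = y' ∧ c = c' := by
  have hmem : (x, !pol F x) ∈ pairClause F x' y' c' := h ▸ by simp [pairClause]
  have hmem' : (y, c) ∈ pairClause F x' y' c' := h ▸ by simp [pairClause]
  simp only [pairClause, Finset.mem_insert, Finset.mem_singleton, Prod.mk.injEq] at hmem hmem'
  constructor
  · exact (hmem.resolve_right fun h => hy' (h.1 ▸ hx)).1
  · exact hmem'.resolve_left fun h => hy (h.1 ▸ hx')

lemma IsPairClause.card_eq_two (h : IsPairClause F C) : C.card = 2 := by
  obtain ⟨x, hx, y, hy, c, rfl⟩ := h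
  have hxy : x ≠ y := fun h => hy (h ▸ hx)
  exact Finset.card_pair (by simp [hxy])

lemma isPairClause_pair {l m : ℕ × Bool} (hl : l.1 ∈ unitVars F) (hlF : {l} ∉ F)
    (hm : m.1 ∉ unitVars F) : IsPairClause F {l, m} := by
  have hpol : l.2 = !pol F l.1 := Bool.eq_not_of_ne fun h => hlF (by
    simpa [unitClause, ← h] using unitClause_mem hl)
  exact ⟨l.1, hl, m.1, hm, m.2, by rw [pairClause, ← hpol]⟩

lemma Sat3.singleton_mem_or_singleton_mem {l m : ℕ × Bool} (h3 : Sat3 F) (h : {l, m} ∈ F)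
    (hl : l.1 ∈ unitVars F) (hm : m.1 ∈ unitVars F) : {l} ∈ F ∨ {m} ∈ F := by
  obtain ⟨τ, hτl, hτm, hsat⟩ := h3 _ (unitClause_mem hl) _ (unitClause_mem hm) _ h
  simp only [SatC, unitClause, Finset.mem_singleton, Finset.mem_insert, exists_eq_left,
    exists_eq_or_imp] at hτl hτm hsat
  refine hsat.imp (fun h => ?_) fun h => ?_
  · simpa [unitClause, ← hτl, h] using unitClause_mem hl
  · simpa [unitClause, ← hτm, h] using unitClause_mem hm

lemma Sat3.card_pos (h3 : Sat3 F) (hC : C ∈ F) : 0 < C.card :=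
  let ⟨_, ⟨l, hl, _⟩, _⟩ := h3 C hC C hC C hC
  Finset.card_pos.2 ⟨l, hl⟩

lemma Sat3.prod_le_of_mem_softClauses (h3 : Sat3 F) (hC : C ∈ softClauses F)
    {q : ℕ × Bool → ℝ} {P N M B : ℝ} (hq : ∀ l, 0 ≤ q l)
    (hP : ∀ l, {l} ∈ F → q l ≤ P) (hN : ∀ l, l.1 ∉ unitVars F → q l ≤ N) (hM : ∀ l, q l ≤ M)
    (hM1 : M ≤ 1) (hPM : P * M ≤ B) (hNN : N * N ≤ B) (hMMM : M ^ 3 ≤ B) :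
    ∏ l ∈ C, q l ≤ B := by
  obtain ⟨hCF, hcard, hpair⟩ := Finset.mem_filter.1 hC
  have hpos := h3.card_pos hCF
  obtain htwo | hthree : C.card = 2 ∨ 3 ≤ C.card := by omega
  · obtain ⟨l, m, hlm, rfl⟩ := Finset.card_eq_two.1 htwo
    rw [Finset.prod_pair hlm]
    have hunit {l m} (hl : {l} ∈ F) : q l * q m ≤ B :=
      (mul_le_mul (hP l hl) (hM m) (hq m) ((hq l).trans (hP l hl))).trans hPM
    by_cases hlF : {l} ∈ F
    · exact hunit hlF
    by_cases hmF : {m} ∈ F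
    · rw [mul_comm]
      exact hunit hmF
    have hl : l.1 ∉ unitVars F := fun hl => by
      by_cases hm : m.1 ∈ unitVars F
      · exact (h3.singleton_mem_or_singleton_mem hCF hl hm).elim hlF hmF
      · exact hpair (isPairClause_pair hl hlF hm)
    have hm : m.1 ∉ unitVars F := fun hm =>
      hpair (Finset.pair_comm l m ▸ isPairClause_pair hm hmF hl)
    exact (mul_le_mul (hN l hl) (hN m hm) (hq m) ((hq l).trans (hN l hl))).trans hNN
  · have hM0 : 0 ≤ M := (hq (0, true)).trans (hM _)
    calc ∏ l ∈ C, q l ≤ ∏ _l ∈ C, M := Finset.prod_le_prod (fun l _ => hq l) fun l _ => hM l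
      _ = M ^ C.card := Finset.prod_const M
      _ ≤ M ^ 3 := pow_le_pow_of_le_one hM0 hM1 hthree
      _ ≤ B := hMMM

end ClauseTypes

section HardPart

variable {F : Finset Clause} {w : Clause → ℕ} {x y : ℕ} {c : Bool}

lemma Sat2.sum_filter_card_eq_one (h2 : Sat2 F) (φ : Clause → ℝ) :
    ∑ C ∈ F with C.card = 1, φ C = ∑ x ∈ unitVars F, φ (unitClause F x) := by
  symm
  refine Finset.sum_nbij (unitClause F) (fun x hx => ?_) (fun x _ y _ h => ?_) (fun C hC => ?_)
    fun _ _ => rfl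
  · exact Finset.mem_filter.2 ⟨unitClause_mem hx, Finset.card_singleton _⟩
  · exact congrArg Prod.fst (Finset.singleton_injective h)
  · obtain ⟨hCF, hcard⟩ := Finset.mem_filter.1 hC
    obtain ⟨⟨x, b⟩, rfl⟩ := Finset.card_eq_one.1 hcard
    exact ⟨x, mem_unitVars.2 ⟨b, hCF⟩, by rw [h2.eq_pol hCF, unitClause]⟩

lemma sum_filter_isPairClause (F : Finset Clause) (φ : Clause → ℝ) :
    ∑ C ∈ F with IsPairClause F C, φ C = ∑ x ∈ unitVars F, ∑ y ∈ nonunitVars F, ∑ c : Bool,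
      if pairClause F x y c ∈ F then φ (pairClause F x y c) else 0 := by
  set T : Finset (ℕ × ℕ × Bool) := unitVars F ×ˢ nonunitVars F ×ˢ Finset.univ with hT
  have hmemT {x y c} : (x, y, c) ∈ T ↔ x ∈ unitVars F ∧ y ∈ nonunitVars F := by simp [hT]
  calc ∑ C ∈ F with IsPairClause F C, φ C
      = ∑ t ∈ T with pairClause F t.1 t.2.1 t.2.2 ∈ F, φ (pairClause F t.1 t.2.1 t.2.2) := by
        symm
        refine Finset.sum_nbij (fun t => pairClause F t.1 t.2.1 t.2.2) ?_ ?_ ?_ fun _ _ => rfl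
        · rintro ⟨x, y, c⟩ h
          obtain ⟨hxy, hF⟩ := Finset.mem_filter.1 h
          obtain ⟨hx, hy⟩ := hmemT.1 hxy
          exact Finset.mem_filter.2
            ⟨hF, x, hx, y, notMem_unitVars_of_mem_nonunitVars hy, c, rfl⟩
        · rintro ⟨x, y, c⟩ h ⟨x', y', c'⟩ h' heq
          obtain ⟨hx, hy⟩ := hmemT.1 (Finset.mem_filter.1 h).1
          obtain ⟨hx', hy'⟩ := hmemT.1 (Finset.mem_filter.1 h').1
          obtain ⟨rfl, rfl, rfl⟩ := pairClause_injective hx (notMem_unitVars_of_mem_nonunitVars hy)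
            hx' (notMem_unitVars_of_mem_nonunitVars hy') heq
          rfl
        · intro C hC
          obtain ⟨hCF, x, hx, y, hy, c, rfl⟩ := Finset.mem_filter.1 hC
          have hyV : y ∈ vars F := fst_mem_vars (l := (y, c)) hCF (by simp [pairClause])
          exact ⟨(x, y, c), Finset.mem_filter.2
            ⟨hmemT.2 ⟨hx, Finset.mem_sdiff.2 ⟨hyV, hy⟩⟩, hCF⟩, rfl⟩
    _ = _ := by simp only [hT, Finset.sum_filter, Finset.sum_product]

lemma sum_eq_sum_card_eq_one_add_sum_isPairClause_add_sum_softClauses (F : Finset Clause)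
    (φ : Clause → ℝ) :
    ∑ C ∈ F, φ C = ∑ C ∈ F with C.card = 1, φ C + ∑ C ∈ F with IsPairClause F C, φ C +
      ∑ C ∈ softClauses F, φ C := by
  simp only [softClauses, Finset.sum_filter, ← Finset.sum_add_distrib]
  refine Finset.sum_congr rfl fun C _ => ?_
  by_cases hpair : IsPairClause F C
  · simp [hpair, hpair.card_eq_two]
  · by_cases hcard : C.card = 1 <;> simp [hpair, hcard]

/-- The weight of the pair clause of `F` given by `x`, `y` and `c`, and zero if there is none. -/
noncomputable def pairWt (F : Finset Clause) (w : Clause → ℕ) (x y : ℕ) (c : Bool) : ℝ :=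
  if pairClause F x y c ∈ F then w (pairClause F x y c) else 0

/-- The total weight of the unit and pair clauses. -/
noncomputable def hardWt (F : Finset Clause) (w : Clause → ℕ) : ℝ :=
  ∑ x ∈ unitVars F, (w (unitClause F x) +
    ∑ y ∈ nonunitVars F, (pairWt F w x y true + pairWt F w x y false))

/-- The part of `expectedLoss F w (pol F) p` coming from unit and pair clauses. -/
noncomputable def hardLoss (F : Finset Clause) (w : Clause → ℕ) (p : ℕ → ℝ) : ℝ :=
  ∑ x ∈ unitVars F, (w (unitClause F x) * (1 - p x) +
    p x * ∑ y ∈ nonunitVars F, (pairWt F w x y true * (1 - p y) + pairWt F w x y false * p y))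

lemma Sat2.wt_eq_hardWt_add (h2 : Sat2 F) (w : Clause → ℕ) :
    (wt w F : ℝ) = hardWt F w + wt w (softClauses F) := by
  simp only [wt, Nat.cast_sum]
  rw [sum_eq_sum_card_eq_one_add_sum_isPairClause_add_sum_softClauses,
    h2.sum_filter_card_eq_one, sum_filter_isPairClause, hardWt, Finset.sum_add_distrib]
  simp only [pairWt, Fintype.sum_bool]

lemma prod_falseProb_pairClause (hx : x ∈ unitVars F) (hy : y ∉ unitVars F) (p : ℕ → ℝ) :
    ∏ l ∈ pairClause F x y c, falseProb (pol F) p l = p x * if c then 1 - p y else p y := by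
  have hxy : x ≠ y := fun h => hy (h ▸ hx)
  rw [pairClause, Finset.prod_pair (by simp [hxy])]
  simp [falseProb, pol_eq_true hy]

lemma Sat2.expectedLoss_eq_hardLoss_add (h2 : Sat2 F) (w : Clause → ℕ) (p : ℕ → ℝ) :
    expectedLoss F w (pol F) p = hardLoss F w p +
      ∑ C ∈ softClauses F, (w C : ℝ) * ∏ l ∈ C, falseProb (pol F) p l := by
  rw [expectedLoss, sum_eq_sum_card_eq_one_add_sum_isPairClause_add_sum_softClauses,
    h2.sum_filter_card_eq_one, sum_filter_isPairClause, hardLoss, Finset.sum_add_distrib]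
  congr 2
  · refine Finset.sum_congr rfl fun x _ => ?_
    simp [unitClause, falseProb]
  · refine Finset.sum_congr rfl fun x hx => ?_
    rw [Finset.mul_sum]
    refine Finset.sum_congr rfl fun y hy => ?_
    simp only [Fintype.sum_bool, pairWt,
      prod_falseProb_pairClause hx (notMem_unitVars_of_mem_nonunitVars hy)]
    split_ifs <;> simp_all <;> ring

lemma one_le_abs_pairWt_sub_pairWt (h3 : Sat3 F) (hw : ∀ C ∈ F, 0 < w C) (hx : x ∈ unitVars F)
    (h : pairClause F x y c ∈ F) : 1 ≤ |pairWt F w x y true - pairWt F w x y false| := by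
  have hpos : (1 : ℝ) ≤ w (pairClause F x y c) := by exact_mod_cast hw _ h
  have h' := h3.pairClause_not_notMem hx h
  cases c <;> simp_all [pairWt]

end HardPart

section RandomFractionalAssignment

open scoped BigOperators

variable {F : Finset Clause} {w : Clause → ℕ} {x y : ℕ}

lemma expect_prod_falseProb_le {C : Clause} {V : Finset ℕ} (hV : ∀ l ∈ C, l.1 ∈ V)
    (hC : Set.InjOn Prod.fst (C : Set (ℕ × Bool))) {π : ℕ → Bool} {p : Finset ℕ → ℕ → ℝ}
    (hp : ∀ A v, p A v ∈ Set.Icc 0 1) {g : ℕ × Bool → Prop → ℝ}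
    (hg : ∀ A l, falseProb π (p A) l ≤ g l (l.1 ∈ A)) :
    𝔼 A ∈ V.powerset, ∏ l ∈ C, falseProb π (p A) l ≤ ∏ l ∈ C, (g l False + g l True) / 2 := by
  rw [← expect_powerset_prod hV hC]
  exact Finset.expect_le_expect fun A _ =>
    Finset.prod_le_prod (fun l _ => falseProb_nonneg (hp A l.1)) fun l _ => hg A l

lemma exists_le_satWt_of_expect_hardLoss_le (hF : IsCNF F) (h2 : Sat2 F)
    {p : Finset ℕ → ℕ → ℝ} (hp : ∀ A v, p A v ∈ Set.Icc 0 1) {g : ℕ × Bool → Prop → ℝ}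
    (hg : ∀ A l, falseProb (pol F) (p A) l ≤ g l (l.1 ∈ A)) {B δ : ℝ}
    (hB : ∀ C ∈ softClauses F, ∏ l ∈ C, (g l False + g l True) / 2 ≤ B)
    (hδ : 𝔼 A ∈ (vars F).powerset, hardLoss F w (p A) ≤ hardWt F w / 3 - δ) :
    ∃ τ : ℕ → Bool,
      2 / 3 * wt w F + δ + (1 / 3 - B) * wt w (softClauses F) ≤ (satWt w τ F : ℝ) := by
  have hsoft : 𝔼 A ∈ (vars F).powerset,
      ∑ C ∈ softClauses F, (w C : ℝ) * ∏ l ∈ C, falseProb (pol F) (p A) l ≤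
      B * wt w (softClauses F) := by
    rw [Finset.expect_sum_comm, wt, Nat.cast_sum, Finset.mul_sum]
    refine Finset.sum_le_sum fun C hC => ?_
    have hCF := (Finset.mem_filter.1 hC).1
    rw [← Finset.mul_expect, mul_comm B]
    gcongr
    exact (expect_prod_falseProb_le (fun l hl => fst_mem_vars hCF hl) (hF.injOn_fst hCF) hp
      hg).trans (hB C hC)
  have hloss : 𝔼 A ∈ (vars F).powerset, expectedLoss F w (pol F) (p A) ≤
      hardWt F w / 3 - δ + B * wt w (softClauses F) := by
    simp only [h2.expectedLoss_eq_hardLoss_add, Finset.expect_add_distrib]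
    exact add_le_add hδ hsoft
  obtain ⟨A, -, hA⟩ := Finset.exists_le_of_expect_le (Finset.powerset_nonempty _) hloss
  obtain ⟨τ, hτ⟩ := exists_wt_sub_expectedLoss_le_satWt hF w (pol F) (hp A)
  exact ⟨τ, by linarith [h2.wt_eq_hardWt_add w]⟩

/-- Unit variables take their preferred polarity with probability `2/3`, the others are fair. -/
noncomputable def baseAssignment (F : Finset Clause) (v : ℕ) : ℝ :=
  if v ∈ unitVars F then 2 / 3 else 1 / 2

lemma hardLoss_baseAssignment (F : Finset Clause) (w : Clause → ℕ) :
    hardLoss F w (baseAssignment F) = hardWt F w / 3 := by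
  rw [hardLoss, hardWt, Finset.sum_div]
  refine Finset.sum_congr rfl fun x hx => ?_
  rw [add_div, Finset.sum_div, Finset.mul_sum]
  congr 1
  · rw [baseAssignment, if_pos hx]
    ring
  · refine Finset.sum_congr rfl fun y hy => ?_
    rw [baseAssignment, baseAssignment, if_pos hx, if_neg (notMem_unitVars_of_mem_nonunitVars hy)]
    ring

theorem exists_two_thirds_wt_add_soft_le_satWt (hF : IsCNF F) (h3 : Sat3 F) (w : Clause → ℕ) :
    ∃ τ : ℕ → Bool, 2 / 3 * wt w F + wt w (softClauses F) / 27 ≤ (satWt w τ F : ℝ) := by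
  obtain ⟨τ, hτ⟩ := exists_le_satWt_of_expect_hardLoss_le (w := w) (B := 8 / 27) (δ := 0) hF h3.sat2
    (p := fun _ => baseAssignment F) (g := fun l _ => falseProb (pol F) (baseAssignment F) l)
    (fun _ v => by
      unfold baseAssignment
      split_ifs <;> norm_num)
    (fun _ _ => le_rfl)
    (fun C hC => by
      refine h3.prod_le_of_mem_softClauses hC (P := 1 / 3) (N := 1 / 2) (M := 2 / 3) (fun l => ?_)
        (fun l hl => ?_) (fun l hl => ?_) (fun l => ?_) (by norm_num) (by norm_num) (by norm_num)
        (by norm_num)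
      · unfold falseProb baseAssignment
        split_ifs <;> norm_num
      · simp only [falseProb, baseAssignment, h3.sat2.eq_pol hl, if_true,
          mem_unitVars.2 ⟨l.2, hl⟩]
        norm_num
      · simp only [falseProb, baseAssignment, if_neg hl]
        split_ifs <;> norm_num
      · unfold falseProb baseAssignment
        split_ifs <;> norm_num)
    (by rw [Finset.expect_const (Finset.powerset_nonempty _), hardLoss_baseAssignment, sub_zero])
  exact ⟨τ, by linarith⟩

/-- The rate at which `hardLoss` decreases in the probability of the unit variable `x`, when the
non-unit variables are true on `A` and false elsewhere. -/
noncomputable def unitGain (F : Finset Clause) (w : Clause → ℕ) (A : Finset ℕ) (x : ℕ) : ℝ :=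
  w (unitClause F x) + ∑ y ∈ nonunitVars F,
    if y ∈ A then -pairWt F w x y false else -pairWt F w x y true

/-- The non-unit variables are true on `A` and false elsewhere, and the probability of each unit
variable is moved away from `2/3` in the favourable direction. The step `1/40` keeps
`(2/3 + 1/40) ^ 3` below `1/3`, so that soft clauses stay harmless. -/
noncomputable def unitTilt (F : Finset Clause) (w : Clause → ℕ) (A : Finset ℕ) (v : ℕ) : ℝ :=
  if v ∈ unitVars F then 2 / 3 + SignType.sign (unitGain F w A v) / 40
  else if v ∈ A then 1 else 0

lemma hardLoss_unitTilt (F : Finset Clause) (w : Clause → ℕ) (A : Finset ℕ) :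
    hardLoss F w (unitTilt F w A) = ∑ x ∈ unitVars F,
      (w (unitClause F x) - 2 / 3 * unitGain F w A x - |unitGain F w A x| / 40) := by
  refine Finset.sum_congr rfl fun x hx => ?_
  have hpairs : ∑ y ∈ nonunitVars F, (pairWt F w x y true * (1 - unitTilt F w A y) +
      pairWt F w x y false * unitTilt F w A y) = w (unitClause F x) - unitGain F w A x := by
    rw [unitGain, sub_add_cancel_left, ← Finset.sum_neg_distrib]
    refine Finset.sum_congr rfl fun y hy => ?_
    rw [unitTilt, if_neg (notMem_unitVars_of_mem_nonunitVars hy)]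
    split_ifs <;> ring
  rw [hpairs, unitTilt, if_pos hx, ← self_mul_sign]
  ring

lemma expect_unitGain (F : Finset Clause) (w : Clause → ℕ) (x : ℕ) :
    𝔼 A ∈ (vars F).powerset, unitGain F w A x = w (unitClause F x) -
      (∑ y ∈ nonunitVars F, (pairWt F w x y true + pairWt F w x y false)) / 2 := by
  simp only [unitGain]
  rw [Finset.expect_add_distrib, Finset.expect_const (Finset.powerset_nonempty _),
    expect_powerset_sum_ite_mem (nonunitVars_subset_vars F), Finset.sum_div, sub_eq_add_neg,
    ← Finset.sum_neg_distrib]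
  congr 1
  exact Finset.sum_congr rfl fun y _ => by ring

lemma half_le_expect_abs_unitGain (h3 : Sat3 F) (hw : ∀ C ∈ F, 0 < w C) (hx : x ∈ unitVars F) :
    1 / 2 ≤ 𝔼 A ∈ (vars F).powerset, |unitGain F w A x| := by
  by_cases h : ∃ y ∈ nonunitVars F, ∃ c, pairClause F x y c ∈ F
  · obtain ⟨y, hy, c, hc⟩ := h
    have habs := one_le_abs_pairWt_sub_pairWt h3 hw hx hc
    have hexp := half_abs_sub_le_expect_abs_add_sum_ite_mem (nonunitVars_subset_vars F hy) hy
      (w (unitClause F x)) (fun y => -pairWt F w x y false) fun y => -pairWt F w x y true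
    rw [neg_sub_neg] at hexp
    exact (by linarith : (1 : ℝ) / 2 ≤ _).trans hexp
  · push Not at h
    have hgain (A : Finset ℕ) : unitGain F w A x = w (unitClause F x) :=
      add_eq_left.2 <| Finset.sum_eq_zero fun y hy => by simp [pairWt, h y hy]
    have hunit : (1 : ℝ) ≤ w (unitClause F x) := by exact_mod_cast hw _ (unitClause_mem hx)
    simp only [hgain, Finset.expect_const (Finset.powerset_nonempty _)]
    exact le_trans (by linarith) (le_abs_self _)

lemma expect_hardLoss_unitTilt_le (h3 : Sat3 F) (hw : ∀ C ∈ F, 0 < w C) :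
    𝔼 A ∈ (vars F).powerset, hardLoss F w (unitTilt F w A) ≤
      hardWt F w / 3 - (unitVars F).card / 80 := by
  have hcard : ((unitVars F).card : ℝ) / 80 = ∑ _x ∈ unitVars F, (1 / 80 : ℝ) := by
    rw [Finset.sum_const, nsmul_eq_mul]
    ring
  simp only [hardLoss_unitTilt]
  rw [Finset.expect_sum_comm, hardWt, Finset.sum_div, hcard, ← Finset.sum_sub_distrib]
  refine Finset.sum_le_sum fun x hx => ?_
  rw [Finset.expect_sub_distrib, Finset.expect_sub_distrib,
    Finset.expect_const (Finset.powerset_nonempty _), ← Finset.mul_expect, ← Finset.expect_div,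
    expect_unitGain]
  linarith [half_le_expect_abs_unitGain h3 hw hx]

lemma unitTilt_mem_Icc {v : ℕ} (hv : v ∈ unitVars F) (A : Finset ℕ) :
    unitTilt F w A v ∈ Set.Icc (77 / 120) (83 / 120) := by
  rw [unitTilt, if_pos hv]
  cases SignType.sign (unitGain F w A v) <;> norm_num

/-- An upper bound for `falseProb (pol F) (unitTilt F w A) l` that depends on `A` only through the
truth value `c` of `l.1 ∈ A`, so that its values at distinct variables are independent. -/
noncomputable def unitTiltBound (F : Finset Clause) (l : ℕ × Bool) (c : Prop) : ℝ :=
  if l.1 ∈ unitVars F then if l.2 = pol F l.1 then 43 / 120 else 83 / 120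
  else if l.2 = pol F l.1 ↔ c then 0 else 1

lemma falseProb_unitTilt_le (A : Finset ℕ) (l : ℕ × Bool) :
    falseProb (pol F) (unitTilt F w A) l ≤ unitTiltBound F l (l.1 ∈ A) := by
  by_cases hl : l.1 ∈ unitVars F
  · obtain ⟨hlow, hhigh⟩ := unitTilt_mem_Icc (w := w) hl A
    simp only [falseProb, unitTiltBound, if_pos hl]
    split_ifs <;> linarith
  · simp only [falseProb, unitTiltBound, unitTilt, if_neg hl]
    by_cases hA : l.1 ∈ A <;> by_cases hpol : l.2 = pol F l.1 <;> simp [hA, hpol]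

lemma Sat3.prod_unitTiltBound_le (h3 : Sat3 F) {C : Clause} (hC : C ∈ softClauses F) :
    ∏ l ∈ C, (unitTiltBound F l False + unitTiltBound F l True) / 2 ≤ 1 / 3 := by
  refine h3.prod_le_of_mem_softClauses hC (P := 43 / 120) (N := 1 / 2) (M := 83 / 120)
    (fun l => ?_) (fun l hl => ?_) (fun l hl => ?_) (fun l => ?_) (by norm_num) (by norm_num)
    (by norm_num) (by norm_num)
  · unfold unitTiltBound
    split_ifs <;> norm_num
  · simp only [unitTiltBound, h3.sat2.eq_pol hl, mem_unitVars.2 ⟨l.2, hl⟩, if_true]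
    norm_num
  · simp only [unitTiltBound, if_neg hl]
    split_ifs <;> simp_all
  · by_cases hl : l.1 ∈ unitVars F <;> by_cases hpol : l.2 = pol F l.1 <;>
      norm_num [unitTiltBound, hl, hpol]

theorem exists_two_thirds_wt_add_unitVars_le_satWt (hF : IsCNF F) (hw : ∀ C ∈ F, 0 < w C)
    (h3 : Sat3 F) :
    ∃ τ : ℕ → Bool, 2 / 3 * wt w F + (unitVars F).card / 80 ≤ (satWt w τ F : ℝ) := by
  have hp (A : Finset ℕ) (v : ℕ) : unitTilt F w A v ∈ Set.Icc 0 1 := by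
    by_cases hv : v ∈ unitVars F
    · exact Set.Icc_subset_Icc (by norm_num) (by norm_num) (unitTilt_mem_Icc hv A)
    · rw [unitTilt, if_neg hv]
      split_ifs <;> norm_num
  simpa using exists_le_satWt_of_expect_hardLoss_le hF h3.sat2 hp falseProb_unitTilt_le
    (fun _ => h3.prod_unitTiltBound_le) (expect_hardLoss_unitTilt_le h3 hw)

/-- The rate at which `hardLoss` decreases in the probability of the non-unit variable `y`, when
unit variables have probability `1` on `A` and `1/3` elsewhere. -/
noncomputable def pairGain (F : Finset Clause) (w : Clause → ℕ) (A : Finset ℕ) (y : ℕ) : ℝ :=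
  ∑ x ∈ unitVars F, if x ∈ A then pairWt F w x y true - pairWt F w x y false
    else (pairWt F w x y true - pairWt F w x y false) / 3

/-- Unit variables have probability `1` on `A` and `1/3` elsewhere, which averages to `2/3`, and the
probability of each non-unit variable is moved away from `1/2` in the favourable direction. The step
`1/14` keeps `(1/2 + 1/14) ^ 2` below `1/3`, so that soft clauses stay harmless. -/
noncomputable def pairTilt (F : Finset Clause) (w : Clause → ℕ) (A : Finset ℕ) (v : ℕ) : ℝ :=
  if v ∈ unitVars F then if v ∈ A then 1 else 1 / 3
  else 1 / 2 + SignType.sign (pairGain F w A v) / 14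

lemma hardLoss_pairTilt (F : Finset Clause) (w : Clause → ℕ) (A : Finset ℕ) :
    hardLoss F w (pairTilt F w A) = ∑ x ∈ unitVars F, (if x ∈ A then
        (∑ y ∈ nonunitVars F, (pairWt F w x y true + pairWt F w x y false)) / 2
      else 2 / 3 * w (unitClause F x) +
        (∑ y ∈ nonunitVars F, (pairWt F w x y true + pairWt F w x y false)) / 6) -
      (∑ y ∈ nonunitVars F, |pairGain F w A y|) / 14 := by
  have habs : (∑ y ∈ nonunitVars F, |pairGain F w A y|) / 14 =
      ∑ x ∈ unitVars F, ∑ y ∈ nonunitVars F, pairTilt F w A x *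
        (pairWt F w x y true - pairWt F w x y false) * (pairTilt F w A y - 1 / 2) := by
    rw [Finset.sum_comm, Finset.sum_div]
    refine Finset.sum_congr rfl fun y hy => ?_
    rw [← Finset.sum_mul, ← self_mul_sign, pairTilt,
      if_neg (notMem_unitVars_of_mem_nonunitVars hy), add_sub_cancel_left, mul_div_assoc, pairGain]
    congr 1
    refine Finset.sum_congr rfl fun x hx => ?_
    rw [pairTilt, if_pos hx]
    split_ifs <;> ring
  rw [habs, ← Finset.sum_sub_distrib, hardLoss]
  refine Finset.sum_congr rfl fun x hx => ?_
  have hpairs : pairTilt F w A x * ∑ y ∈ nonunitVars F, (pairWt F w x y true *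
        (1 - pairTilt F w A y) + pairWt F w x y false * pairTilt F w A y) =
      pairTilt F w A x / 2 *
        ∑ y ∈ nonunitVars F, (pairWt F w x y true + pairWt F w x y false) -
      ∑ y ∈ nonunitVars F, pairTilt F w A x *
        (pairWt F w x y true - pairWt F w x y false) * (pairTilt F w A y - 1 / 2) := by
    rw [Finset.mul_sum, Finset.mul_sum, ← Finset.sum_sub_distrib]
    exact Finset.sum_congr rfl fun y _ => by ring
  rw [hpairs, ← add_sub_assoc]
  congr 1
  rw [pairTilt, if_pos hx]
  split_ifs <;> ring

lemma third_le_expect_abs_pairGain (h3 : Sat3 F) (hw : ∀ C ∈ F, 0 < w C) (hy : y ∈ pairVars F) :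
    1 / 3 ≤ 𝔼 A ∈ (vars F).powerset, |pairGain F w A y| := by
  obtain ⟨-, x, hx, c, hc⟩ := Finset.mem_filter.1 hy
  set d : ℕ → ℝ := fun x => pairWt F w x y true - pairWt F w x y false
  have habs : 1 ≤ |d x| := one_le_abs_pairWt_sub_pairWt h3 hw hx hc
  have hexp := half_abs_sub_le_expect_abs_add_sum_ite_mem (unitVars_subset_vars F hx) hx 0 d
    fun x => d x / 3
  have hthird : |d x - d x / 3| = 2 / 3 * |d x| := by
    rw [show d x - d x / 3 = 2 / 3 * d x by ring, abs_mul, abs_of_pos (by norm_num)]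
  simp only [zero_add] at hexp
  exact (by linarith : (1 : ℝ) / 3 ≤ _).trans hexp

lemma expect_hardLoss_pairTilt_le (h3 : Sat3 F) (hw : ∀ C ∈ F, 0 < w C) :
    𝔼 A ∈ (vars F).powerset, hardLoss F w (pairTilt F w A) ≤
      hardWt F w / 3 - (pairVars F).card / 42 := by
  have hgain : ((pairVars F).card : ℝ) / 3 ≤
      ∑ y ∈ nonunitVars F, 𝔼 A ∈ (vars F).powerset, |pairGain F w A y| :=
    calc ((pairVars F).card : ℝ) / 3 = ∑ _y ∈ pairVars F, (1 / 3 : ℝ) := by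
          rw [Finset.sum_const, nsmul_eq_mul]
          ring
      _ ≤ ∑ y ∈ pairVars F, 𝔼 A ∈ (vars F).powerset, |pairGain F w A y| :=
          Finset.sum_le_sum fun y hy => third_le_expect_abs_pairGain h3 hw hy
      _ ≤ ∑ y ∈ nonunitVars F, 𝔼 A ∈ (vars F).powerset, |pairGain F w A y| :=
          Finset.sum_le_sum_of_subset_of_nonneg (Finset.filter_subset _ _) fun _ _ _ =>
            Finset.expect_nonneg fun _ _ => abs_nonneg _
  simp only [hardLoss_pairTilt]
  rw [Finset.expect_sub_distrib, expect_powerset_sum_ite_mem (unitVars_subset_vars F), hardWt,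
    Finset.sum_div (unitVars F)]
  refine sub_le_sub (Finset.sum_le_sum fun x _ => le_of_eq (by ring)) ?_
  rw [← Finset.expect_div, Finset.expect_sum_comm]
  linarith

lemma pairTilt_mem_Icc {v : ℕ} (hv : v ∉ unitVars F) (A : Finset ℕ) :
    pairTilt F w A v ∈ Set.Icc (3 / 7) (4 / 7) := by
  rw [pairTilt, if_neg hv]
  cases SignType.sign (pairGain F w A v) <;> norm_num

/-- An upper bound for `falseProb (pol F) (pairTilt F w A) l` that depends on `A` only through the
truth value `c` of `l.1 ∈ A`, so that its values at distinct variables are independent. -/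
noncomputable def pairTiltBound (F : Finset Clause) (l : ℕ × Bool) (c : Prop) : ℝ :=
  if l.1 ∈ unitVars F then
    if l.2 = pol F l.1 then if c then 0 else 2 / 3 else if c then 1 else 1 / 3
  else 4 / 7

lemma falseProb_pairTilt_le (A : Finset ℕ) (l : ℕ × Bool) :
    falseProb (pol F) (pairTilt F w A) l ≤ pairTiltBound F l (l.1 ∈ A) := by
  by_cases hl : l.1 ∈ unitVars F
  · simp only [falseProb, pairTiltBound, pairTilt, if_pos hl]
    split_ifs <;> norm_num
  · obtain ⟨hlow, hhigh⟩ := pairTilt_mem_Icc (w := w) hl A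
    simp only [falseProb, pairTiltBound, if_neg hl]
    split_ifs <;> linarith

lemma Sat3.prod_pairTiltBound_le (h3 : Sat3 F) {C : Clause} (hC : C ∈ softClauses F) :
    ∏ l ∈ C, (pairTiltBound F l False + pairTiltBound F l True) / 2 ≤ 1 / 3 := by
  refine h3.prod_le_of_mem_softClauses hC (P := 1 / 3) (N := 4 / 7) (M := 2 / 3)
    (fun l => ?_) (fun l hl => ?_) (fun l hl => ?_) (fun l => ?_) (by norm_num) (by norm_num)
    (by norm_num) (by norm_num)
  · unfold pairTiltBound
    split_ifs <;> norm_num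
  · simp only [pairTiltBound, h3.sat2.eq_pol hl, mem_unitVars.2 ⟨l.2, hl⟩, if_true, if_false]
    norm_num
  · simp only [pairTiltBound, if_neg hl]
    norm_num
  · simp only [pairTiltBound, if_true, if_false]
    split_ifs <;> norm_num

theorem exists_two_thirds_wt_add_pairVars_le_satWt (hF : IsCNF F) (hw : ∀ C ∈ F, 0 < w C)
    (h3 : Sat3 F) :
    ∃ τ : ℕ → Bool, 2 / 3 * wt w F + (pairVars F).card / 42 ≤ (satWt w τ F : ℝ) := by
  have hp (A : Finset ℕ) (v : ℕ) : pairTilt F w A v ∈ Set.Icc 0 1 := by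
    by_cases hv : v ∈ unitVars F
    · rw [pairTilt, if_pos hv]
      split_ifs <;> norm_num
    · exact Set.Icc_subset_Icc (by norm_num) (by norm_num) (pairTilt_mem_Icc hv A)
  simpa using exists_le_satWt_of_expect_hardLoss_le hF h3.sat2 hp falseProb_pairTilt_le
    (fun _ => h3.prod_pairTiltBound_le) (expect_hardLoss_pairTilt_le h3 hw)

end RandomFractionalAssignment

lemma mem_softClauses_of_mem_FU {F : Finset Clause} {C : Clause}
    (hC : C ∈ FU F (nonunitVars F \ pairVars F)) : C ∈ softClauses F := by
  obtain ⟨hCF, l, hl, hlX⟩ := Finset.mem_filter.1 hC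
  obtain ⟨hlN, hlp⟩ := Finset.mem_sdiff.1 hlX
  have hlu := notMem_unitVars_of_mem_nonunitVars hlN
  refine Finset.mem_filter.2 ⟨hCF, fun hcard => ?_, ?_⟩
  · obtain ⟨m, rfl⟩ := Finset.card_eq_one.1 hcard
    obtain rfl := Finset.mem_singleton.1 hl
    exact hlu (mem_unitVars.2 ⟨l.2, hCF⟩)
  · rintro ⟨x, hx, y, -, c, rfl⟩
    rcases Finset.mem_insert.1 hl with rfl | hl
    · exact hlu hx
    · obtain rfl := Finset.mem_singleton.1 hl
      exact hlp (Finset.mem_filter.2 ⟨hlN, x, hx, c, hCF⟩)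

lemma Expanding.card_vars_le {F : Finset Clause} {w : Clause → ℕ} (hexp : Expanding F w) :
    (vars F).card ≤ (unitVars F).card + (pairVars F).card + wt w (softClauses F) := by
  have hrest : (nonunitVars F \ pairVars F).card ≤ wt w (softClauses F) :=
    (hexp _ (Finset.sdiff_subset.trans (nonunitVars_subset_vars F))).trans
      (Finset.sum_le_sum_of_subset fun _ => mem_softClauses_of_mem_FU)
  have hnonunit : (nonunitVars F \ pairVars F).card + (pairVars F).card = (nonunitVars F).card :=
    Finset.card_sdiff_add_card_eq_card (Finset.filter_subset _ _)
  have hvars : (nonunitVars F).card + (unitVars F).card = (vars F).card :=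
    Finset.card_sdiff_add_card_eq_card (unitVars_subset_vars F)
  omega

theorem stmt18_general (F : Finset Clause) (w : Clause → ℕ)
    (hF : IsCNF F) (hw : ∀ C ∈ F, 0 < w C) (h3 : Sat3 F) :
    ∃ τ : ℕ → Bool, 2 / 3 * wt w F +
      ((unitVars F).card + (pairVars F).card + wt w (softClauses F)) / 149 ≤
        (satWt w τ F : ℝ) := by
  obtain ⟨τ₁, h₁⟩ := exists_two_thirds_wt_add_unitVars_le_satWt hF hw h3
  obtain ⟨τ₂, h₂⟩ := exists_two_thirds_wt_add_pairVars_le_satWt hF hw h3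
  obtain ⟨τ₃, h₃⟩ := exists_two_thirds_wt_add_soft_le_satWt hF h3 w
  -- The surpluses `a / 80`, `b / 42`, `c / 27` cannot all be below `(a + b + c) / (80 + 42 + 27)`.
  by_contra! hlt
  linarith [hlt τ₁, hlt τ₂, hlt τ₃]

theorem stmt18 (F : Finset Clause) (w : Clause → ℕ)
    (hF : IsCNF F) (hw : ∀ C ∈ F, 0 < w C) (h3 : Sat3 F) (hexp : Expanding F w) :
    ∃ τ : ℕ → Bool,
      (2:ℝ)/3 * wt w F + (2:ℝ)/453 * ((vars F).card : ℝ) ≤ (satWt w τ F : ℝ) := by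
  obtain ⟨τ, hτ⟩ := stmt18_general F w hF hw h3
  have hcard : ((vars F).card : ℝ) ≤ (unitVars F).card + (pairVars F).card +
      wt w (softClauses F) := mod_cast hexp.card_vars_le
  exact ⟨τ, by linarith [(vars F).card.cast_nonneg (α := ℝ)]⟩
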